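/- Let S ⊂ ℝ^k be a halfspace and let Σ ⊆ S be an additive semigroup containing 0. Then the maximal ideal space M(AP^k_Σ) of the Banach algebra AP^k_Σ is a contractible topological space. -/

import Mathlib

/- Almost periodic functions of `k` real variables, their Bohr-Fourier
coefficients and spectra, the Wiener algebra, and halfspaces. -/

open MeasureTheory Filter BoundedContinuousFunction

noncomputable section

/-- The Banach algebra of bounded continuous functions `ℝ^k → ℂ` (sup norm). -/
abbrev APB (k : ℕ) := BoundedContinuousFunction (Fin k → ℝ) ℂ

/-- The elementary exponential `e_λ(x) = e^{i⟨λ,x⟩}` as a bounded continuous function. -/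
def apExp (k : ℕ) (lam : Fin k → ℝ) : APB k :=
  BoundedContinuousFunction.ofNormedAddCommGroup
    (fun x => Complex.exp (Complex.I * ((∑ j, lam j * x j : ℝ) : ℂ)))
    (by fun_prop) 1
    (fun x => by
      simp only [Complex.norm_exp, Complex.mul_re, Complex.I_re, Complex.I_im, Complex.ofReal_im,
        zero_mul, mul_zero, sub_zero, Real.exp_zero, le_refl])

/-- `AP^k`: the closed subalgebra of `L^∞`-type bounded continuous functions
generated by all exponentials `e_λ`, `λ ∈ ℝ^k`. -/
def APalg (k : ℕ) : Subalgebra ℂ (APB k) :=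
  (Algebra.adjoin ℂ (Set.range (apExp k))).topologicalClosure

/-- The Bohr-Fourier coefficient
`f_λ = lim_{T→∞} (2T)^{-k} ∫_{[-T,T]^k} e^{-i⟨λ,x⟩} f(x) dx`. -/
def bohrCoeff (k : ℕ) (f : (Fin k → ℝ) → ℂ) (lam : Fin k → ℝ) : ℂ :=
  limUnder atTop (fun T : ℝ =>
    (((2 * T) ^ k : ℝ) : ℂ)⁻¹ *
      ∫ x in Set.Icc (fun _ => -T : Fin k → ℝ) (fun _ => T),
        Complex.exp (-(Complex.I * ((∑ j, lam j * x j : ℝ) : ℂ))) * f x)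

/-- The Bohr-Fourier spectrum `σ(f) = {λ : f_λ ≠ 0}`. -/
def bohrSpectrum (k : ℕ) (f : (Fin k → ℝ) → ℂ) : Set (Fin k → ℝ) :=
  {lam | bohrCoeff k f lam ≠ 0}

/-- Membership in `AP^k_Δ = {f ∈ AP^k : σ(f) ⊆ Δ}`. -/
def APmem (k : ℕ) (Δ : Set (Fin k → ℝ)) (f : APB k) : Prop :=
  f ∈ APalg k ∧ bohrSpectrum k ⇑f ⊆ Δ

/-- Membership in the Wiener algebra `APW^k_Δ`: almost periodic with spectrum
in `Δ` and absolutely convergent Bohr-Fourier series. -/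
def APWmem (k : ℕ) (Δ : Set (Fin k → ℝ)) (f : APB k) : Prop :=
  APmem k Δ f ∧ Summable (fun lam => ‖bohrCoeff k (⇑f) lam‖)

/-- The Wiener norm `‖f‖_W = ∑_λ |f_λ|`. -/
def wienerNorm (k : ℕ) (f : (Fin k → ℝ) → ℂ) : ℝ :=
  ∑' lam, ‖bohrCoeff k f lam‖

/-- A halfspace `S ⊂ ℝ^k`: `ℝ^k = S ∪ (-S)`, `S ∩ (-S) = {0}`, and `S` is
closed under addition and under multiplication by nonnegative reals. -/
structure IsHalfspace (k : ℕ) (S : Set (Fin k → ℝ)) : Prop where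
  union : S ∪ -S = Set.univ
  inter : S ∩ -S = {0}
  add_mem : ∀ x ∈ S, ∀ y ∈ S, x + y ∈ S
  smul_mem : ∀ x ∈ S, ∀ a : ℝ, 0 ≤ a → a • x ∈ S

/- The maximal ideal space of a subalgebra of bounded continuous functions,
realized as the set of nonzero multiplicative linear functionals on the given
carrier set, with the weak* (pointwise convergence) topology. -/

/-- The maximal ideal space of the (sub)algebra with carrier `Sset`: nonzero
multiplicative linear functionals `φ : Sset → ℂ`.  The topology (weak*) is the
subspace topology of pointwise convergence. -/
def apCharacters (k : ℕ) (Sset : Set (APB k)) : Set (↥Sset → ℂ) :=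
  {φ | φ ≠ 0 ∧
    (∀ (f g : ↥Sset) (h : (f : APB k) + (g : APB k) ∈ Sset),
      φ ⟨(f : APB k) + (g : APB k), h⟩ = φ f + φ g) ∧
    (∀ (c : ℂ) (f : ↥Sset) (h : c • (f : APB k) ∈ Sset),
      φ ⟨c • (f : APB k), h⟩ = c * φ f) ∧
    (∀ (f g : ↥Sset) (h : (f : APB k) * (g : APB k) ∈ Sset),
      φ ⟨(f : APB k) * (g : APB k), h⟩ = φ f * φ g)}

open Topology

/-! ### Exponentials -/

theorem apExp_apply (k : ℕ) (lam x : Fin k → ℝ) :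
    apExp k lam x = Complex.exp (Complex.I * ((lam ⬝ᵥ x : ℝ) : ℂ)) := rfl

theorem norm_apExp_apply (k : ℕ) (lam x : Fin k → ℝ) : ‖apExp k lam x‖ = 1 := by
  rw [apExp_apply, mul_comm, Complex.norm_exp_ofReal_mul_I]

theorem norm_apExp_le (k : ℕ) (lam : Fin k → ℝ) : ‖apExp k lam‖ ≤ 1 :=
  (BoundedContinuousFunction.norm_le zero_le_one).2 fun x => (norm_apExp_apply k lam x).le

theorem apExp_apply_add (k : ℕ) (lam x y : Fin k → ℝ) :
    apExp k lam (x + y) = apExp k lam x * apExp k lam y := by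
  simp only [apExp_apply, dotProduct_add, Complex.ofReal_add, mul_add, Complex.exp_add]

theorem apExp_zero (k : ℕ) : apExp k 0 = 1 := by
  ext x
  simp [apExp_apply]

theorem apExp_add (k : ℕ) (lam mu : Fin k → ℝ) :
    apExp k (lam + mu) = apExp k lam * apExp k mu := by
  ext x
  simp only [BoundedContinuousFunction.mul_apply, apExp_apply, add_dotProduct, Complex.ofReal_add,
    mul_add, Complex.exp_add]

theorem apExp_apply_neg (k : ℕ) (lam x : Fin k → ℝ) :
    apExp k (-lam) x = (starRingEnd ℂ) (apExp k lam x) := by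
  simp only [apExp_apply, ← Complex.exp_conj]
  simp

theorem sum_apExp_apply (k : ℕ) (F : Finset (Fin k → ℝ)) (a : (Fin k → ℝ) → ℂ)
    (x : Fin k → ℝ) :
    (∑ lam ∈ F, a lam • apExp k lam) x = ∑ lam ∈ F, a lam * apExp k lam x := by
  simp [BoundedContinuousFunction.sum_apply]

/-! ### Contractive semicharacters -/

/-- Semicharacters of `Sg` for which the induced functional on the trigonometric polynomials with
spectrum in `Sg` is contractive in the sup norm. Values outside `Sg` are irrelevant. -/
def contractiveSemicharacters (k : ℕ) (Sg : Set (Fin k → ℝ)) : Set ((Fin k → ℝ) → ℂ) :=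
  {χ | χ 0 = 1 ∧ (∀ lam ∈ Sg, ∀ mu ∈ Sg, χ (lam + mu) = χ lam * χ mu) ∧
    ∀ F : Finset (Fin k → ℝ), ↑F ⊆ Sg → ∀ a : (Fin k → ℝ) → ℂ,
      ‖∑ lam ∈ F, a lam * χ lam‖ ≤ ‖∑ lam ∈ F, a lam • apExp k lam‖}

theorem contractiveSemicharacters_anti (k : ℕ) {Sg S : Set (Fin k → ℝ)} (h : Sg ⊆ S) :
    contractiveSemicharacters k S ⊆ contractiveSemicharacters k Sg :=
  fun _ hχ => ⟨hχ.1, fun lam hl mu hm => hχ.2.1 lam (h hl) mu (h hm),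
    fun F hF a => hχ.2.2 F (hF.trans h) a⟩

theorem one_mem_contractiveSemicharacters (k : ℕ) (Sg : Set (Fin k → ℝ)) :
    1 ∈ contractiveSemicharacters k Sg := by
  refine ⟨rfl, fun _ _ _ _ => (mul_one _).symm, fun F _ a => ?_⟩
  have h := (∑ lam ∈ F, a lam • apExp k lam).norm_coe_le_norm 0
  rw [sum_apExp_apply] at h
  simpa [apExp_apply] using h

/-- A contractive semicharacter acts as a contractive Fourier multiplier. -/
theorem norm_sum_mul_smul_apExp_le (k : ℕ) {Sg : Set (Fin k → ℝ)} {χ : (Fin k → ℝ) → ℂ}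
    (hχ : χ ∈ contractiveSemicharacters k Sg) (F : Finset (Fin k → ℝ)) (hF : ↑F ⊆ Sg)
    (a : (Fin k → ℝ) → ℂ) :
    ‖∑ lam ∈ F, (a lam * χ lam) • apExp k lam‖ ≤ ‖∑ lam ∈ F, a lam • apExp k lam‖ := by
  refine (BoundedContinuousFunction.norm_le (norm_nonneg _)).2 fun x => ?_
  rw [sum_apExp_apply k F (fun lam => a lam * χ lam)]
  have h := hχ.2.2 F hF fun lam => a lam * apExp k lam x
  calc ‖∑ lam ∈ F, a lam * χ lam * apExp k lam x‖
      = ‖∑ lam ∈ F, a lam * apExp k lam x * χ lam‖ := by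
        simp only [mul_right_comm]
    _ ≤ _ := h
    _ ≤ _ := by
      refine (BoundedContinuousFunction.norm_le (norm_nonneg _)).2 fun y => ?_
      rw [sum_apExp_apply k F (fun lam => a lam * apExp k lam x)]
      have := (∑ lam ∈ F, a lam • apExp k lam).norm_coe_le_norm (x + y)
      rw [sum_apExp_apply] at this
      simpa only [apExp_apply_add, mul_assoc] using this

theorem mul_mem_contractiveSemicharacters (k : ℕ) {Sg : Set (Fin k → ℝ)}
    {χ ψ : (Fin k → ℝ) → ℂ} (hχ : χ ∈ contractiveSemicharacters k Sg)
    (hψ : ψ ∈ contractiveSemicharacters k Sg) : χ * ψ ∈ contractiveSemicharacters k Sg := by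
  refine ⟨by simp [hχ.1, hψ.1], fun lam hl mu hm => ?_, fun F hF a => ?_⟩
  · simp only [Pi.mul_apply, hχ.2.1 lam hl mu hm, hψ.2.1 lam hl mu hm]
    ring
  · refine le_trans ?_ (norm_sum_mul_smul_apExp_le k hχ F hF a)
    simpa only [Pi.mul_apply, mul_assoc] using hψ.2.2 F hF fun lam => a lam * χ lam

theorem isClosed_contractiveSemicharacters (k : ℕ) (Sg : Set (Fin k → ℝ)) :
    IsClosed (contractiveSemicharacters k Sg) := by
  simp only [contractiveSemicharacters, Set.ofPred_and, Set.ofPred_forall]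
  refine (isClosed_eq (by fun_prop) (by fun_prop)).inter (IsClosed.inter ?_ ?_)
  · exact isClosed_iInter fun lam => isClosed_iInter fun _ => isClosed_iInter fun mu =>
      isClosed_iInter fun _ => isClosed_eq (by fun_prop) (by fun_prop)
  · exact isClosed_iInter fun F => isClosed_iInter fun _ => isClosed_iInter fun a =>
      isClosed_le (by fun_prop) (by fun_prop)

/-- Damping in a direction in which the spectrum is nonnegative is a contraction, by the
Phragmen-Lindelöf principle. -/
theorem norm_sum_mul_exp_le (k : ℕ) (v : Fin k → ℝ) (F : Finset (Fin k → ℝ))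
    (hF : ∀ lam ∈ F, 0 ≤ lam ⬝ᵥ v) (a : (Fin k → ℝ) → ℂ) {t : ℝ} (ht : 0 ≤ t) :
    ‖∑ lam ∈ F, a lam * Complex.exp (-((lam ⬝ᵥ v : ℝ) * t : ℂ))‖ ≤
      ‖∑ lam ∈ F, a lam • apExp k lam‖ := by
  let f : ℂ → ℂ := fun z => ∑ lam ∈ F, a lam * Complex.exp (-((lam ⬝ᵥ v : ℝ) * z : ℂ))
  have hbound : ∀ z : ℂ, 0 ≤ z.re → ‖f z‖ ≤ ∑ lam ∈ F, ‖a lam‖ := fun z hz => by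
    refine (norm_sum_le _ _).trans (Finset.sum_le_sum fun lam hl => ?_)
    rw [norm_mul, Complex.norm_exp]
    refine mul_le_of_le_one_right (norm_nonneg _) (Real.exp_le_one_iff.2 ?_)
    simpa using mul_nonneg (hF lam hl) hz
  have hdiff : Differentiable ℂ f := by
    simp only [f]
    fun_prop
  refine PhragmenLindelof.right_half_plane_of_bounded_on_real (f := f) (z := (t : ℂ))
    hdiff.diffContOnCl ⟨1, one_lt_two, 0, ?_⟩ ?_ (fun x => ?_) (by simpa using ht)
  · refine Asymptotics.IsBigO.of_bound (∑ lam ∈ F, ‖a lam‖) ?_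
    filter_upwards [mem_inf_of_right (mem_principal_self _)] with z hz
    simpa using hbound z (le_of_lt hz)
  · refine isBoundedUnder_of_eventually_le (a := ∑ lam ∈ F, ‖a lam‖) ?_
    filter_upwards [eventually_ge_atTop 0] with x hx
    exact hbound x (by simpa using hx)
  · have h := (∑ lam ∈ F, a lam • apExp k lam).norm_coe_le_norm (-x • v)
    rw [sum_apExp_apply] at h
    have hfx : f (x * Complex.I) = ∑ lam ∈ F, a lam * apExp k lam (-x • v) := by
      refine Finset.sum_congr rfl fun lam _ => ?_
      rw [apExp_apply, dotProduct_smul, smul_eq_mul]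
      push_cast
      ring_nf
    rwa [hfx]

/-- The indicator function of a subspace. -/
def subspaceIndicator (k : ℕ) (W : Submodule ℝ (Fin k → ℝ)) : (Fin k → ℝ) → ℂ :=
  (W : Set (Fin k → ℝ)).indicator 1

/-- The multipliers `1_W(λ) r^|⟨λ, v⟩|`. -/
def dampedIndicator (k : ℕ) (W : Submodule ℝ (Fin k → ℝ)) (v : Fin k → ℝ) (r : ℝ) :
    (Fin k → ℝ) → ℂ :=
  fun lam => subspaceIndicator k W lam * ((r ^ |lam ⬝ᵥ v| : ℝ) : ℂ)

theorem continuous_dampedIndicator (k : ℕ) (W : Submodule ℝ (Fin k → ℝ)) (v : Fin k → ℝ) :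
    Continuous (dampedIndicator k W v) := by
  refine continuous_pi fun lam => continuous_const.mul (Complex.continuous_ofReal.comp ?_)
  exact Real.continuous_rpow_const (abs_nonneg _)

theorem dampedIndicator_one (k : ℕ) (W : Submodule ℝ (Fin k → ℝ)) (v : Fin k → ℝ) :
    dampedIndicator k W v 1 = subspaceIndicator k W := by
  ext lam
  simp [dampedIndicator]

theorem dampedIndicator_zero (k : ℕ) (W : Submodule ℝ (Fin k → ℝ)) (v : Fin k → ℝ) :
    dampedIndicator k W v 0 =
      subspaceIndicator k (W ⊓ LinearMap.ker ((dotProductBilin ℝ ℝ).flip v)) := by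
  ext lam
  by_cases hW : lam ∈ W <;> by_cases hv : lam ⬝ᵥ v = 0 <;>
    simp [dampedIndicator, subspaceIndicator, hW, hv, Set.indicator, Real.zero_rpow]

theorem dampedIndicator_mem (k : ℕ) {S : Set (Fin k → ℝ)} {W : Submodule ℝ (Fin k → ℝ)}
    {v : Fin k → ℝ} (hW : subspaceIndicator k W ∈ contractiveSemicharacters k S)
    (hv : ∀ lam ∈ S, lam ∈ W → 0 ≤ lam ⬝ᵥ v) {r : ℝ} (hr0 : 0 < r) (hr1 : r ≤ 1) :
    dampedIndicator k W v r ∈ contractiveSemicharacters k S := by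
  classical
  have hval : ∀ lam, 0 ≤ lam ⬝ᵥ v → ((r ^ |lam ⬝ᵥ v| : ℝ) : ℂ) =
      Complex.exp (-((lam ⬝ᵥ v : ℝ) * (-Real.log r : ℝ) : ℂ)) := fun lam hl => by
    rw [abs_of_nonneg hl, Real.rpow_def_of_pos hr0]
    push_cast
    ring_nf
  refine ⟨by simp [dampedIndicator, hW.1], fun lam hl mu hm => ?_, fun F hF a => ?_⟩
  · simp only [dampedIndicator, hW.2.1 lam hl mu hm]
    by_cases hlW : lam ∈ W
    · by_cases hmW : mu ∈ W
      · have h1 := hv lam hl hlW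
        have h2 := hv mu hm hmW
        rw [hval lam h1, hval mu h2, hval (lam + mu) (by rw [add_dotProduct]; positivity),
          mul_mul_mul_comm, ← Complex.exp_add]
        congr 2
        simp only [add_dotProduct]
        push_cast
        ring
      · simp [subspaceIndicator, hmW]
    · simp [subspaceIndicator, hlW]
  · have hmult := norm_sum_mul_smul_apExp_le k hW F hF a
    refine le_trans ?_ hmult
    have key := norm_sum_mul_exp_le k v (F.filter (· ∈ W))
      (fun lam hl => hv lam (hF (Finset.mem_filter.1 hl).1) (Finset.mem_filter.1 hl).2) a
      (t := -Real.log r) (neg_nonneg.2 (Real.log_nonpos hr0.le hr1))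
    rw [Finset.sum_filter, Finset.sum_filter] at key
    have h1 : ∑ lam ∈ F, a lam * dampedIndicator k W v r lam = ∑ lam ∈ F, if lam ∈ W then
        a lam * Complex.exp (-((lam ⬝ᵥ v : ℝ) * (-Real.log r : ℝ) : ℂ)) else 0 := by
      refine Finset.sum_congr rfl fun lam hl => ?_
      by_cases hlW : lam ∈ W
      · simp only [dampedIndicator, hval lam (hv lam (hF hl) hlW)]
        simp [subspaceIndicator, hlW]
      · simp [dampedIndicator, subspaceIndicator, hlW]
    have h2 : ∑ lam ∈ F, (a lam * subspaceIndicator k W lam) • apExp k lam =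
        ∑ lam ∈ F, if lam ∈ W then a lam • apExp k lam else 0 := by
      refine Finset.sum_congr rfl fun lam _ => ?_
      by_cases hlW : lam ∈ W <;> simp [subspaceIndicator, hlW]
    rwa [h1, h2]

theorem joinedIn_subspaceIndicator_inf_ker (k : ℕ) {S : Set (Fin k → ℝ)}
    {W : Submodule ℝ (Fin k → ℝ)} {v : Fin k → ℝ}
    (hW : subspaceIndicator k W ∈ contractiveSemicharacters k S)
    (hv : ∀ lam ∈ S, lam ∈ W → 0 ≤ lam ⬝ᵥ v) :
    JoinedIn (contractiveSemicharacters k S) (subspaceIndicator k W)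
      (subspaceIndicator k (W ⊓ LinearMap.ker ((dotProductBilin ℝ ℝ).flip v))) := by
  have hmem : ∀ r ∈ Set.Icc (0 : ℝ) 1,
      dampedIndicator k W v r ∈ contractiveSemicharacters k S := by
    intro r hr
    rw [← closure_Ioc (zero_ne_one (α := ℝ))] at hr
    rw [← (isClosed_contractiveSemicharacters k S).closure_eq]
    exact map_mem_closure (continuous_dampedIndicator k W v) hr
      fun s hs => dampedIndicator_mem k hW hv hs.1 hs.2
  refine JoinedIn.symm (JoinedIn.ofLine (f := dampedIndicator k W v)
    (continuous_dampedIndicator k W v).continuousOn (dampedIndicator_zero k W v)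
    (dampedIndicator_one k W v) ?_)
  rintro _ ⟨r, hr, rfl⟩
  exact hmem r hr

/-! ### Halfspaces are lexicographically ordered by linear functionals -/

theorem IsHalfspace.exists_linear_nonneg {k : ℕ} {S : Set (Fin k → ℝ)} (hS : IsHalfspace k S)
    {W : Submodule ℝ (Fin k → ℝ)} (hW : W ≠ ⊥) :
    ∃ v : Fin k → ℝ, (∀ lam ∈ S, lam ∈ W → 0 ≤ lam ⬝ᵥ v) ∧ ∃ w ∈ W, w ⬝ᵥ v ≠ 0 := by
  let C : Set W := {w | (w : Fin k → ℝ) ∈ S}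
  have h0S : (0 : Fin k → ℝ) ∈ S := by
    have : (0 : Fin k → ℝ) ∈ S ∩ -S := by rw [hS.inter]; rfl
    exact this.1
  have hconv : Convex ℝ C := fun x hx y hy a b ha hb _ =>
    hS.add_mem _ (hS.smul_mem _ hx a ha) _ (hS.smul_mem _ hy b hb)
  have hor : ∀ w : W, w ∈ C ∨ -w ∈ C := fun w => by
    have : (w : Fin k → ℝ) ∈ S ∪ -S := by rw [hS.union]; trivial
    exact this
  have hspan : affineSpan ℝ C = ⊤ := by
    have h0 : (0 : W) ∈ C := h0S
    rw [AffineSubspace.affineSpan_eq_top_iff_vectorSpan_eq_top_of_nonempty ℝ W W ⟨0, h0⟩, eq_top_iff]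
    intro w _
    rcases hor w with h | h
    · simpa using vsub_mem_vectorSpan ℝ h h0
    · simpa using vsub_mem_vectorSpan ℝ h0 h
  have hint : (interior C).Nonempty := hconv.interior_nonempty_iff_affineSpan_eq_top.2 hspan
  have h0int : (0 : W) ∉ interior C := by
    intro h0
    obtain ⟨w, hwW, hw0⟩ := W.exists_mem_ne_zero_of_ne_bot hW
    have hC : ∀ u : W, u ∈ C := fun u => by
      have hlim : Tendsto (fun t : ℝ => t • u) (𝓝[>] 0) (𝓝 0) := by
        have : Tendsto (fun t : ℝ => t • u) (𝓝 0) (𝓝 ((0 : ℝ) • u)) :=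
          Continuous.tendsto (by fun_prop) 0
        rw [zero_smul] at this
        exact this.mono_left nhdsWithin_le_nhds
      obtain ⟨t, htC, ht⟩ := ((hlim.eventually (mem_interior_iff_mem_nhds.1 h0)).and
        self_mem_nhdsWithin).exists
      have ht : (0 : ℝ) < t := ht
      have := hS.smul_mem _ htC t⁻¹ (inv_nonneg.2 ht.le)
      rw [Submodule.coe_smul, smul_smul, inv_mul_cancel₀ ht.ne', one_smul] at this
      exact this
    have : w ∈ S ∩ -S := ⟨hC ⟨w, hwW⟩, hC (-⟨w, hwW⟩)⟩
    rw [hS.inter] at this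
    exact hw0 this
  obtain ⟨f, hf⟩ := geometric_hahn_banach_open_point hconv.interior isOpen_interior h0int
  simp only [map_zero] at hf
  have hfC : ∀ u ∈ C, f u ≤ 0 := fun u hu => by
    have hu' : u ∈ closure (interior C) := by
      rw [hconv.closure_interior_eq_closure_of_nonempty_interior hint]
      exact subset_closure hu
    exact closure_minimal (fun x hx => (hf x hx).le)
      (isClosed_le f.continuous continuous_const) hu'
  obtain ⟨g, hg⟩ := LinearMap.exists_extend (-(f : W →ₗ[ℝ] ℝ))
  have hgdot : ∀ x, x ⬝ᵥ (fun i => g (Pi.single i 1)) = g x := fun x => by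
    rw [LinearMap.pi_apply_eq_sum_univ g x]
    refine Finset.sum_congr rfl fun i _ => ?_
    have hi : (Pi.single i 1 : Fin k → ℝ) = fun j => if i = j then 1 else 0 := by
      ext j
      simp [Pi.single_apply, eq_comm]
    simp only [smul_eq_mul, hi]
  have hgW : ∀ w : W, g w = -f w := fun w => by
    simpa using LinearMap.congr_fun hg w
  refine ⟨fun i => g (Pi.single i 1), fun lam hl hlW => ?_, ?_⟩
  · rw [hgdot, hgW ⟨lam, hlW⟩]
    exact neg_nonneg.2 (hfC ⟨lam, hlW⟩ hl)
  · obtain ⟨u, hu⟩ := hint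
    refine ⟨u, u.2, ?_⟩
    rw [hgdot, hgW u]
    exact neg_ne_zero.2 (hf u hu).ne

theorem IsHalfspace.joinedIn_subspaceIndicator_bot {k : ℕ} {S : Set (Fin k → ℝ)}
    (hS : IsHalfspace k S) (W : Submodule ℝ (Fin k → ℝ))
    (hW : subspaceIndicator k W ∈ contractiveSemicharacters k S) :
    JoinedIn (contractiveSemicharacters k S) (subspaceIndicator k W) (subspaceIndicator k ⊥) := by
  induction hn : Module.finrank ℝ W using Nat.strong_induction_on generalizing W with
  | _ n ih =>
    by_cases hbot : W = ⊥
    · subst hbot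
      exact JoinedIn.refl hW
    · obtain ⟨v, hv, w, hwW, hw⟩ := hS.exists_linear_nonneg hbot
      have hstep := joinedIn_subspaceIndicator_inf_ker k hW hv
      refine hstep.trans (ih _ ?_ _ hstep.target_mem rfl)
      rw [← hn]
      refine Submodule.finrank_lt_finrank_of_lt (lt_of_le_of_ne inf_le_left fun h => hw ?_)
      have hmem : w ∈ W ⊓ LinearMap.ker ((dotProductBilin ℝ ℝ).flip v) := by rwa [h]
      simpa using hmem.2

theorem IsHalfspace.joinedIn_one {k : ℕ} {S : Set (Fin k → ℝ)} (hS : IsHalfspace k S) :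
    JoinedIn (contractiveSemicharacters k S) 1 (subspaceIndicator k ⊥) := by
  have htop : subspaceIndicator k ⊤ = 1 := by
    simp [subspaceIndicator]
  have h := hS.joinedIn_subspaceIndicator_bot ⊤
    (htop ▸ one_mem_contractiveSemicharacters k S)
  rwa [htop] at h

theorem contractibleSpace_contractiveSemicharacters {k : ℕ} {S Sg : Set (Fin k → ℝ)}
    (hS : IsHalfspace k S) (hSgS : Sg ⊆ S) :
    ContractibleSpace (contractiveSemicharacters k Sg) := by
  have hj := hS.joinedIn_one.mono (contractiveSemicharacters_anti k hSgS)
  obtain ⟨γ, hγ⟩ := hj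
  rw [contractible_iff_id_nullhomotopic]
  refine ⟨⟨subspaceIndicator k ⊥, by simpa using hγ 1⟩, ⟨⟨⟨fun p =>
    ⟨γ p.1 * p.2.1, mul_mem_contractiveSemicharacters k (hγ p.1) p.2.2⟩, ?_⟩, ?_, ?_⟩⟩⟩
  · exact Continuous.subtype_mk (by fun_prop) _
  · intro χ
    simp
  · intro χ
    ext lam
    simp only [Path.target]
    by_cases hl : lam = 0
    · simp [hl, χ.2.1, subspaceIndicator]
    · simp [hl, subspaceIndicator]

/-! ### The closed algebra generated by the exponentials of a semigroup -/

/-- The closed subalgebra generated by the exponentials with frequencies in `Sg`. -/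
def expAlg (k : ℕ) (Sg : Set (Fin k → ℝ)) : Subalgebra ℂ (APB k) :=
  (Algebra.adjoin ℂ (apExp k '' Sg)).topologicalClosure

theorem expAlg_univ (k : ℕ) : expAlg k Set.univ = APalg k := by
  rw [expAlg, Set.image_univ, APalg]

theorem expAlg_mono (k : ℕ) {Sg S : Set (Fin k → ℝ)} (h : Sg ⊆ S) : expAlg k Sg ≤ expAlg k S :=
  Subalgebra.topologicalClosure_mono (Algebra.adjoin_mono (Set.image_mono h))

theorem expAlg_le_APalg (k : ℕ) (Sg : Set (Fin k → ℝ)) : expAlg k Sg ≤ APalg k :=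
  (expAlg_mono k (Set.subset_univ Sg)).trans (expAlg_univ k).le

theorem apExp_mem_expAlg (k : ℕ) {Sg : Set (Fin k → ℝ)} {lam : Fin k → ℝ} (h : lam ∈ Sg) :
    apExp k lam ∈ expAlg k Sg :=
  Subalgebra.le_topologicalClosure _ (Algebra.subset_adjoin (Set.mem_image_of_mem _ h))

theorem apExp_mem_APalg (k : ℕ) (lam : Fin k → ℝ) : apExp k lam ∈ APalg k :=
  expAlg_univ k ▸ apExp_mem_expAlg k (Set.mem_univ lam)

theorem isClosed_expAlg (k : ℕ) (Sg : Set (Fin k → ℝ)) : IsClosed (expAlg k Sg : Set (APB k)) :=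
  Subalgebra.isClosed_topologicalClosure _

theorem expAlg_induction (k : ℕ) {Sg : Set (Fin k → ℝ)} (h0 : (0 : Fin k → ℝ) ∈ Sg)
    (hadd : ∀ x ∈ Sg, ∀ y ∈ Sg, x + y ∈ Sg) {P : APB k → Prop}
    (exp : ∀ lam ∈ Sg, P (apExp k lam))
    (add : ∀ f ∈ expAlg k Sg, ∀ g ∈ expAlg k Sg, P f → P g → P (f + g))
    (smul : ∀ (c : ℂ), ∀ f ∈ expAlg k Sg, P f → P (c • f))
    (lim : ∀ f ∈ expAlg k Sg,
      (∀ ε > (0 : ℝ), ∃ p ∈ expAlg k Sg, P p ∧ ‖f - p‖ < ε) → P f) :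
    ∀ f ∈ expAlg k Sg, P f := by
  have hpoly : ∀ p ∈ Algebra.adjoin ℂ (apExp k '' Sg), p ∈ expAlg k Sg ∧ P p := by
    intro p hp
    have hcl : (Submonoid.closure (apExp k '' Sg) : Set (APB k)) ⊆ apExp k '' Sg := by
      intro q hq
      induction hq using Submonoid.closure_induction with
      | mem q hq => exact hq
      | one => exact ⟨0, h0, apExp_zero k⟩
      | mul q r _ _ hq hr =>
        obtain ⟨lam, hl, rfl⟩ := hq
        obtain ⟨mu, hm, rfl⟩ := hr
        exact ⟨lam + mu, hadd lam hl mu hm, apExp_add k lam mu⟩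
    rw [← Subalgebra.mem_toSubmodule, Algebra.adjoin_eq_span] at hp
    replace hp := Submodule.span_mono hcl hp
    induction hp using Submodule.span_induction with
    | mem q hq =>
      obtain ⟨lam, hl, rfl⟩ := hq
      exact ⟨apExp_mem_expAlg k hl, exp lam hl⟩
    | zero =>
      have := smul 0 _ (apExp_mem_expAlg k h0) (exp 0 h0)
      rw [zero_smul] at this
      exact ⟨zero_mem _, this⟩
    | add q r _ _ hq hr => exact ⟨add_mem hq.1 hr.1, add q hq.1 r hr.1 hq.2 hr.2⟩
    | smul c q _ hq => exact ⟨Subalgebra.smul_mem _ hq.1 c, smul c q hq.1 hq.2⟩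
  intro f hf
  refine lim f hf fun ε hε => ?_
  obtain ⟨p, hp, hpf⟩ := Metric.mem_closure_iff.1 hf ε hε
  exact ⟨p, (hpoly p hp).1, (hpoly p hp).2, by rwa [← dist_eq_norm]⟩

theorem APalg_induction (k : ℕ) {P : APB k → Prop}
    (exp : ∀ lam, P (apExp k lam))
    (add : ∀ f ∈ APalg k, ∀ g ∈ APalg k, P f → P g → P (f + g))
    (smul : ∀ (c : ℂ), ∀ f ∈ APalg k, P f → P (c • f))
    (lim : ∀ f ∈ APalg k, (∀ ε > (0 : ℝ), ∃ p ∈ APalg k, P p ∧ ‖f - p‖ < ε) → P f) :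
    ∀ f ∈ APalg k, P f := by
  rw [← expAlg_univ] at *
  exact expAlg_induction k (Set.mem_univ _) (fun _ _ _ _ => Set.mem_univ _)
    (fun lam _ => exp lam) add smul lim

/-! ### Means over boxes -/

theorem integrableOn_box (k : ℕ) (T : ℝ) (f : APB k) :
    IntegrableOn f (Set.Icc (fun _ => -T : Fin k → ℝ) (fun _ => T)) :=
  f.continuous.continuousOn.integrableOn_Icc

/-- The mean of a bounded continuous function over the box `[-T,T]^k`. -/
def boxMean (k : ℕ) (T : ℝ) : APB k →ₗ[ℂ] ℂ where
  toFun f := (((2 * T) ^ k : ℝ) : ℂ)⁻¹ *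
    ∫ x in Set.Icc (fun _ => -T : Fin k → ℝ) (fun _ => T), f x
  map_add' f g := by
    simp only [BoundedContinuousFunction.add_apply]
    rw [integral_add (integrableOn_box k T f) (integrableOn_box k T g), mul_add]
  map_smul' c f := by
    simp only [BoundedContinuousFunction.smul_apply, smul_eq_mul, RingHom.id_apply]
    rw [integral_const_mul]
    ring

theorem boxMean_apply (k : ℕ) (T : ℝ) (f : APB k) :
    boxMean k T f = (((2 * T) ^ k : ℝ) : ℂ)⁻¹ *
      ∫ x in Set.Icc (fun _ => -T : Fin k → ℝ) (fun _ => T), f x := rfl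

theorem norm_boxMean_le_re (k : ℕ) {T : ℝ} (hT : 0 < T) (f g : APB k)
    (h : ∀ x, ‖f x‖ ≤ (g x).re) : ‖boxMean k T f‖ ≤ (boxMean k T g).re := by
  rw [boxMean_apply, boxMean_apply, ← Complex.ofReal_inv, Complex.re_ofReal_mul, norm_mul,
    Complex.norm_real, Real.norm_of_nonneg (by positivity)]
  gcongr
  refine (norm_integral_le_integral_norm _).trans ?_
  rw [← RCLike.re_eq_complex_re, ← integral_re (integrableOn_box k T g)]
  exact integral_mono (integrableOn_box k T f).norm (integrableOn_box k T g).re h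

theorem boxMean_one (k : ℕ) {T : ℝ} (hT : 0 < T) : boxMean k T 1 = 1 := by
  rw [boxMean_apply]
  simp only [BoundedContinuousFunction.coe_one, Pi.one_apply]
  rw [setIntegral_const, Measure.real, Real.volume_Icc_pi_toReal (fun _ => by linarith)]
  simp only [Finset.prod_const, Finset.card_univ, Fintype.card_fin, sub_neg_eq_add, ← two_mul]
  rw [Complex.real_smul, mul_one, inv_mul_cancel₀]
  exact_mod_cast (by positivity : (2 * T) ^ k ≠ 0)

theorem norm_boxMean_le (k : ℕ) {T : ℝ} (hT : 0 < T) (f : APB k) : ‖boxMean k T f‖ ≤ ‖f‖ := by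
  have h := norm_boxMean_le_re k hT f ((‖f‖ : ℂ) • 1) fun x => by
    simpa using f.norm_coe_le_norm x
  rwa [map_smul, boxMean_one k hT, smul_eq_mul, mul_one, Complex.ofReal_re] at h

theorem tendsto_interval_mean_exp (c : ℝ) :
    Tendsto (fun T : ℝ => ((2 * T : ℝ) : ℂ)⁻¹ *
      ∫ x in Set.Icc (-T) T, Complex.exp (Complex.I * ((c * x : ℝ) : ℂ))) atTop
      (𝓝 (if c = 0 then 1 else 0)) := by
  split_ifs with hc
  · refine tendsto_const_nhds.congr' ?_
    filter_upwards [eventually_gt_atTop 0] with T hT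
    subst hc
    have h2 : ((2 * T : ℝ) : ℂ) ≠ 0 := by exact_mod_cast (by positivity : 2 * T ≠ 0)
    simp only [zero_mul, Complex.ofReal_zero, mul_zero, Complex.exp_zero, setIntegral_const,
      Real.volume_real_Icc, Complex.real_smul, mul_one]
    rw [max_eq_left (by linarith), sub_neg_eq_add, ← two_mul, inv_mul_cancel₀ h2]
  · have hIc : Complex.I * c ≠ 0 := mul_ne_zero Complex.I_ne_zero (by exact_mod_cast hc)
    refine squeeze_zero_norm' (a := fun T : ℝ => (2 * T)⁻¹ * (2 / |c|)) ?_ ?_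
    · filter_upwards [eventually_gt_atTop 0] with T hT
      rw [norm_mul, norm_inv, Complex.norm_real, Real.norm_of_nonneg (by positivity)]
      gcongr
      rw [integral_Icc_eq_integral_Ioc, ← intervalIntegral.integral_of_le (by linarith)]
      simp only [Complex.ofReal_mul, ← mul_assoc]
      rw [integral_exp_mul_complex hIc, norm_div, norm_mul, Complex.norm_I, one_mul,
        Complex.norm_real, Real.norm_eq_abs]
      gcongr
      have hn : ∀ s : ℝ, ‖Complex.exp (Complex.I * c * s)‖ = 1 := fun s => by
        rw [mul_assoc, mul_comm, ← Complex.ofReal_mul, Complex.norm_exp_ofReal_mul_I]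
      refine (norm_sub_le _ _).trans ?_
      rw [hn, hn]
      norm_num
    · have : Tendsto (fun T : ℝ => (2 * T)⁻¹) atTop (𝓝 0) :=
        (tendsto_id.const_mul_atTop two_pos).inv_tendsto_atTop
      simpa using this.mul_const (2 / |c|)

theorem tendsto_boxMean_apExp (k : ℕ) (lam : Fin k → ℝ) :
    Tendsto (fun T => boxMean k T (apExp k lam)) atTop (𝓝 (if lam = 0 then 1 else 0)) := by
  have hprod : ∀ T, boxMean k T (apExp k lam) = ∏ j, (((2 * T : ℝ) : ℂ)⁻¹ *
      ∫ x in Set.Icc (-T) T, Complex.exp (Complex.I * ((lam j * x : ℝ) : ℂ))) := fun T => by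
    rw [boxMean_apply, Finset.prod_mul_distrib, Finset.prod_const, Finset.card_univ,
      Fintype.card_fin, ← integral_fintype_prod_eq_prod, ← Measure.restrict_pi_pi,
      Set.pi_univ_Icc, Complex.ofReal_pow, inv_pow, volume_pi]
    simp only [apExp_apply, dotProduct, Complex.ofReal_sum, Finset.mul_sum, Complex.exp_sum]
  simp only [hprod]
  convert tendsto_finsetProd Finset.univ fun j _ => tendsto_interval_mean_exp (lam j) using 2
  rw [Finset.prod_ite_zero]
  simp [funext_iff]

theorem exists_tendsto_boxMean (k : ℕ) :
    ∀ f ∈ APalg k, ∃ L, Tendsto (fun T => boxMean k T f) atTop (𝓝 L) := by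
  refine APalg_induction k (fun lam => ⟨_, tendsto_boxMean_apExp k lam⟩) ?_ ?_ ?_
  · rintro f - g - ⟨L, hL⟩ ⟨M, hM⟩
    exact ⟨L + M, by simpa only [map_add] using hL.add hM⟩
  · rintro c f - ⟨L, hL⟩
    exact ⟨c • L, by simpa only [map_smul] using hL.const_smul c⟩
  · intro f _ h
    refine cauchySeq_tendsto_of_complete (Metric.cauchySeq_iff.2 fun ε hε => ?_)
    obtain ⟨p, -, ⟨L, hL⟩, hp⟩ := h (ε / 3) (by positivity)
    obtain ⟨N, hN⟩ := Metric.cauchySeq_iff.1 hL.cauchySeq (ε / 3) (by positivity)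
    have hfp : ∀ T, 0 < T → dist (boxMean k T f) (boxMean k T p) < ε / 3 := fun T hT => by
      rw [dist_eq_norm, ← map_sub]
      exact (norm_boxMean_le k hT _).trans_lt hp
    refine ⟨max N 1, fun s hs t ht => ?_⟩
    have hs0 : 0 < s := lt_of_lt_of_le one_pos ((le_max_right _ _).trans hs)
    have ht0 : 0 < t := lt_of_lt_of_le one_pos ((le_max_right _ _).trans ht)
    have h1 := hfp s hs0
    have h2 := hN s ((le_max_left _ _).trans hs) t ((le_max_left _ _).trans ht)
    have h3 := hfp t ht0
    rw [dist_comm] at h3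
    have h4 := dist_triangle4 (boxMean k s f) (boxMean k s p) (boxMean k t p) (boxMean k t f)
    linarith

/-! ### Bohr-Fourier coefficients of almost periodic functions -/

theorem tendsto_bohrCoeff (k : ℕ) {f : APB k} (hf : f ∈ APalg k) (lam : Fin k → ℝ) :
    Tendsto (fun T => boxMean k T (apExp k (-lam) * f)) atTop (𝓝 (bohrCoeff k f lam)) := by
  have heq : bohrCoeff k f lam = limUnder atTop fun T => boxMean k T (apExp k (-lam) * f) := by
    simp only [bohrCoeff, boxMean_apply, BoundedContinuousFunction.mul_apply, apExp_apply,
      neg_dotProduct, Complex.ofReal_neg, mul_neg]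
    rfl
  rw [heq]
  exact tendsto_nhds_limUnder
    (exists_tendsto_boxMean k _ (mul_mem (apExp_mem_APalg k (-lam)) hf))

theorem bohrCoeff_add (k : ℕ) {f g : APB k} (hf : f ∈ APalg k) (hg : g ∈ APalg k)
    (lam : Fin k → ℝ) : bohrCoeff k ⇑(f + g) lam = bohrCoeff k f lam + bohrCoeff k g lam := by
  refine tendsto_nhds_unique (tendsto_bohrCoeff k (add_mem hf hg) lam) ?_
  simpa only [mul_add, map_add] using (tendsto_bohrCoeff k hf lam).add (tendsto_bohrCoeff k hg lam)

theorem bohrCoeff_smul (k : ℕ) (c : ℂ) {f : APB k} (hf : f ∈ APalg k)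
    (lam : Fin k → ℝ) : bohrCoeff k ⇑(c • f) lam = c * bohrCoeff k f lam := by
  refine tendsto_nhds_unique (tendsto_bohrCoeff k (Subalgebra.smul_mem _ hf c) lam) ?_
  simpa only [mul_smul_comm, map_smul, smul_eq_mul] using
    (tendsto_bohrCoeff k hf lam).const_mul c

theorem bohrCoeff_sub (k : ℕ) {f g : APB k} (hf : f ∈ APalg k) (hg : g ∈ APalg k)
    (lam : Fin k → ℝ) : bohrCoeff k ⇑(f - g) lam = bohrCoeff k f lam - bohrCoeff k g lam := by
  refine tendsto_nhds_unique (tendsto_bohrCoeff k (sub_mem hf hg) lam) ?_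
  simpa only [mul_sub, map_sub] using (tendsto_bohrCoeff k hf lam).sub (tendsto_bohrCoeff k hg lam)

theorem norm_bohrCoeff_le (k : ℕ) {f : APB k} (hf : f ∈ APalg k) (lam : Fin k → ℝ) :
    ‖bohrCoeff k f lam‖ ≤ ‖f‖ := by
  refine le_of_tendsto (tendsto_bohrCoeff k hf lam).norm ?_
  filter_upwards [eventually_gt_atTop 0] with T hT
  refine (norm_boxMean_le k hT _).trans ((norm_mul_le _ _).trans ?_)
  exact mul_le_of_le_one_left (norm_nonneg _) (norm_apExp_le k _)

theorem bohrCoeff_apExp (k : ℕ) (mu lam : Fin k → ℝ) :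
    bohrCoeff k (apExp k mu) lam = if lam = mu then 1 else 0 := by
  refine tendsto_nhds_unique (tendsto_bohrCoeff k (apExp_mem_APalg k mu) lam) ?_
  rw [← apExp_add]
  convert tendsto_boxMean_apExp k (-lam + mu) using 3
  simp [neg_add_eq_zero]

/-! ### Følner sets -/

/-- The number of elements of `F` whose translate by `a` is again in `F`. -/
def translateCount {V : Type*} [AddCommGroup V] (F : Finset V) (a : V) : ℕ :=
  open Classical in (F.filter fun x => a + x ∈ F).card

theorem exists_card_succ_le_of_polynomial_growth (c : ℕ → ℕ) (d : ℕ) (h0 : 1 ≤ c 0)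
    (hc : ∀ n, c n ≤ (n + 1) ^ d) {δ : ℝ} (hδ : 0 < δ) :
    ∃ n, (c (n + 1) : ℝ) ≤ (1 + δ) * c n := by
  by_contra! h
  have hexp : ∀ n, (1 + δ) ^ n ≤ (c n : ℝ) := fun n => by
    induction n with
    | zero => simpa using h0
    | succ n ih =>
      rw [pow_succ']
      exact (mul_le_mul_of_nonneg_left ih (by positivity)).trans (h n).le
  have hlim := (tendsto_pow_const_div_const_pow_of_one_lt d (by linarith : 1 < 1 + δ)).comp
    (tendsto_add_atTop_nat 1)
  obtain ⟨n, hn⟩ := (hlim.eventually (gt_mem_nhds (by positivity : 0 < (1 + δ)⁻¹))).exists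
  simp only [Function.comp_apply, pow_succ (1 + δ)] at hn
  rw [div_lt_iff₀ (by positivity), mul_comm, mul_assoc, mul_inv_cancel₀ (by positivity),
    mul_one] at hn
  have h1 : (c n : ℝ) ≤ ((n + 1 : ℕ) : ℝ) ^ d := by exact_mod_cast hc n
  linarith [hexp n]

theorem exists_folner_set {V : Type*} [AddCommGroup V] (L : Finset V) {δ : ℝ} (hδ : 0 < δ) :
    ∃ F : Finset V, F.Nonempty ∧ ∀ a ∈ L, (1 - δ) * F.card ≤ translateCount F a := by
  classical
  let F : ℕ → Finset V := fun n =>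
    (Fintype.piFinset fun _ : L => Finset.range (n + 1)).image fun c => ∑ a : L, c a • (a : V)
  have hmono : ∀ n, F n ⊆ F (n + 1) := fun n =>
    Finset.image_subset_image (Fintype.piFinset_subset _ _ fun _ =>
      Finset.range_subset_range.2 (Nat.le_succ _))
  have hadd : ∀ n, ∀ a ∈ L, ∀ x ∈ F n, a + x ∈ F (n + 1) := fun n a ha x hx => by
    obtain ⟨c, hc, rfl⟩ := Finset.mem_image.1 hx
    refine Finset.mem_image.2 ⟨c + Pi.single ⟨a, ha⟩ 1, ?_, ?_⟩
    · rw [Fintype.mem_piFinset] at hc ⊢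
      intro b
      have hb := hc b
      rw [Finset.mem_range] at hb ⊢
      by_cases hab : b = ⟨a, ha⟩
      · subst hab
        simpa using hb
      · simp only [Pi.add_apply, Pi.single_eq_of_ne hab]
        omega
    · simp only [Pi.add_apply, add_smul, Finset.sum_add_distrib]
      have hsingle : ∑ b : L, (Pi.single (⟨a, ha⟩ : L) 1 : L → ℕ) b • (b : V) = a := by
        rw [Finset.sum_eq_single (⟨a, ha⟩ : L)]
        · simp
        · intro b _ hb
          simp [Pi.single_eq_of_ne hb]
        · simp
      rw [add_comm a, hsingle]
  have hne : ∀ n, (F n).Nonempty := fun n =>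
    ⟨_, Finset.mem_image_of_mem _ ((Fintype.mem_piFinset (f := 0)).2 fun _ => by simp)⟩
  obtain ⟨n, hn⟩ := exists_card_succ_le_of_polynomial_growth (fun n => (F n).card) L.card
    (hne 0).card_pos (fun n => Finset.card_image_le.trans (by simp)) hδ
  refine ⟨F n, hne n, fun a ha => ?_⟩
  have hsplit := Finset.card_filter_add_card_filter_not (s := F n) fun x => a + x ∈ F n
  have hout : ((F n).filter fun x => ¬a + x ∈ F n).card ≤ (F (n + 1) \ F n).card := by
    refine Finset.card_le_card_of_injOn (a + ·) (fun x hx => ?_) (add_right_injective a).injOn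
    rw [Finset.mem_coe, Finset.mem_filter] at hx
    rw [Finset.mem_coe, Finset.mem_sdiff]
    exact ⟨hadd n a ha x hx.1, hx.2⟩
  have hsdiff := Finset.card_sdiff_add_card_eq_card (hmono n)
  have hcount : (F (n + 1)).card + translateCount (F n) a ≥ 2 * (F n).card := by
    have : translateCount (F n) a = ((F n).filter fun x => a + x ∈ F n).card := by
      unfold translateCount
      congr
    omega
  have hcount' : ((F (n + 1)).card : ℝ) + translateCount (F n) a ≥ 2 * (F n).card := by
    exact_mod_cast hcount
  linarith

theorem exists_folner_net (V : Type*) [AddCommGroup V] :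
    ∃ F : Finset V × ℕ → Finset V, (∀ p, (F p).Nonempty) ∧
      ∀ a, Tendsto (fun p => (translateCount (F p) a : ℝ) / (F p).card) atTop (𝓝 1) := by
  classical
  choose F hne hF using fun p : Finset V × ℕ =>
    exists_folner_set p.1 (δ := 1 / ((p.2 : ℝ) + 1)) (by positivity)
  refine ⟨F, hne, fun a => ?_⟩
  have hlim : Tendsto (fun p : Finset V × ℕ => 1 - 1 / ((p.2 : ℝ) + 1)) atTop (𝓝 1) := by
    have h := tendsto_one_div_add_atTop_nhds_zero_nat (𝕜 := ℝ)
    have h2 : Tendsto (Prod.snd : Finset V × ℕ → ℕ) atTop atTop := by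
      rw [← prod_atTop_atTop_eq]
      exact tendsto_snd
    simpa using (h.comp h2).const_sub 1
  refine tendsto_of_tendsto_of_tendsto_of_le_of_le' hlim tendsto_const_nhds ?_ ?_
  · filter_upwards [eventually_ge_atTop (({a} : Finset V), 0)] with p hp
    rw [le_div_iff₀ (by exact_mod_cast (hne p).card_pos)]
    exact hF p a (hp.1 (Finset.mem_singleton_self a))
  · refine Eventually.of_forall fun p => div_le_one_of_le₀ ?_ (by positivity)
    exact_mod_cast Finset.card_filter_le _ _

/-! ### Bochner-Fejér summation -/

/-- The Bochner-Fejér sum of `f` with kernel `|∑_{μ ∈ F} e_μ|² / |F|`. -/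
def fejerSum (k : ℕ) (F : Finset (Fin k → ℝ)) (f : APB k) : APB k :=
  (F.card : ℂ)⁻¹ • ∑ mu ∈ F, ∑ nu ∈ F, bohrCoeff k f (mu - nu) • apExp k (mu - nu)

theorem fejerSum_add (k : ℕ) (F : Finset (Fin k → ℝ)) {f g : APB k} (hf : f ∈ APalg k)
    (hg : g ∈ APalg k) : fejerSum k F (f + g) = fejerSum k F f + fejerSum k F g := by
  simp only [fejerSum, bohrCoeff_add k hf hg, add_smul, Finset.sum_add_distrib, smul_add]

theorem fejerSum_sub (k : ℕ) (F : Finset (Fin k → ℝ)) {f g : APB k} (hf : f ∈ APalg k)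
    (hg : g ∈ APalg k) : fejerSum k F (f - g) = fejerSum k F f - fejerSum k F g := by
  simp only [fejerSum, bohrCoeff_sub k hf hg, sub_smul, Finset.sum_sub_distrib, smul_sub]

theorem fejerSum_smul (k : ℕ) (F : Finset (Fin k → ℝ)) (c : ℂ) {f : APB k} (hf : f ∈ APalg k) :
    fejerSum k F (c • f) = c • fejerSum k F f := by
  simp only [fejerSum, bohrCoeff_smul k c hf, mul_smul, ← Finset.smul_sum]
  rw [smul_comm]

theorem fejerSum_apExp (k : ℕ) (F : Finset (Fin k → ℝ)) (lam : Fin k → ℝ) :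
    fejerSum k F (apExp k lam) =
      (((translateCount F lam : ℝ) / F.card : ℝ) : ℂ) • apExp k lam := by
  classical
  have hterm : ∀ mu nu, bohrCoeff k (apExp k lam) (mu - nu) • apExp k (mu - nu) =
      if mu = lam + nu then apExp k lam else 0 := fun mu nu => by
    rw [bohrCoeff_apExp]
    by_cases h : mu - nu = lam
    · simp [sub_eq_iff_eq_add.1 h]
    · simp [h, mt sub_eq_iff_eq_add.2 h]
  simp only [fejerSum, hterm]
  rw [Finset.sum_comm]
  simp only [Finset.sum_ite_eq', ← Finset.sum_filter, Finset.sum_const]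
  rw [← Nat.cast_smul_eq_nsmul ℂ, smul_smul]
  congr 1
  push_cast
  rw [mul_comm, ← div_eq_mul_inv]
  unfold translateCount
  congr

theorem norm_fejerSum_le (k : ℕ) {F : Finset (Fin k → ℝ)} (hF : F.Nonempty) {f : APB k}
    (hf : f ∈ APalg k) : ‖fejerSum k F f‖ ≤ ‖f‖ := by
  classical
  have hcard : (F.card : ℂ) ≠ 0 := by exact_mod_cast hF.card_pos.ne'
  refine (BoundedContinuousFunction.norm_le (norm_nonneg _)).2 fun x => ?_
  let K : APB k := (F.card : ℂ)⁻¹ • ∑ mu ∈ F, ∑ nu ∈ F,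
    apExp k (mu - nu) x • apExp k (-(mu - nu))
  have hK : ∀ y, K y = (((F.card : ℝ)⁻¹ * ‖∑ mu ∈ F, apExp k mu (x - y)‖ ^ 2 : ℝ) : ℂ) := by
    intro y
    have hterm : ∀ mu nu, apExp k (mu - nu) x * apExp k (-(mu - nu)) y =
        apExp k mu (x - y) * (starRingEnd ℂ) (apExp k nu (x - y)) := fun mu nu => by
      rw [← apExp_apply_neg, ← BoundedContinuousFunction.mul_apply, ← apExp_add, ← sub_eq_add_neg,
        sub_eq_add_neg x y, apExp_apply_add]
      congr 1
      simp [apExp_apply]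
    rw [Complex.ofReal_mul, Complex.ofReal_pow, ← Complex.mul_conj', map_sum,
      Finset.sum_mul_sum]
    simp only [K, BoundedContinuousFunction.smul_apply, BoundedContinuousFunction.sum_apply,
      smul_eq_mul, hterm, Complex.ofReal_inv, Complex.ofReal_natCast]
  have hleft : Tendsto (fun T => boxMean k T (K * f)) atTop (𝓝 (fejerSum k F f x)) := by
    have : fejerSum k F f x = (F.card : ℂ)⁻¹ * ∑ mu ∈ F, ∑ nu ∈ F,
        apExp k (mu - nu) x * bohrCoeff k f (mu - nu) := by
      simp [fejerSum, BoundedContinuousFunction.sum_apply, mul_comm]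
    rw [this]
    simp only [K, smul_mul_assoc, Finset.sum_mul, map_smul, map_sum, smul_eq_mul]
    exact (tendsto_finsetSum _ fun mu _ => tendsto_finsetSum _ fun nu _ =>
      (tendsto_bohrCoeff k hf (mu - nu)).const_mul _).const_mul _
  have hright : Tendsto (fun T => boxMean k T ((‖f‖ : ℂ) • K)) atTop (𝓝 (‖f‖ : ℂ)) := by
    have hnorm : (‖f‖ : ℂ) = ‖f‖ * ((F.card : ℂ)⁻¹ * ∑ mu ∈ F, ∑ nu ∈ F,
        apExp k (mu - nu) x * if -(mu - nu) = 0 then 1 else 0) := by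
      have hinner : ∀ mu ∈ F, ∑ nu ∈ F,
          apExp k (mu - nu) x * (if -(mu - nu) = 0 then (1 : ℂ) else 0) = 1 := fun mu hmu => by
        rw [Finset.sum_eq_single mu]
        · simp [apExp_zero]
        · intro nu _ hnu
          simp [sub_eq_zero, hnu]
        · exact fun h => absurd hmu h
      rw [Finset.sum_congr rfl hinner, Finset.sum_const, nsmul_eq_mul, mul_one,
        inv_mul_cancel₀ hcard, mul_one]
    nth_rewrite 2 [hnorm]
    simp only [K, map_smul, map_sum, smul_eq_mul]
    exact ((tendsto_finsetSum _ fun mu _ => tendsto_finsetSum _ fun nu _ =>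
      (tendsto_boxMean_apExp k _).const_mul _).const_mul _).const_mul _
  refine le_of_tendsto_of_tendsto hleft.norm
    ((Complex.continuous_re.tendsto _).comp hright) ?_
  filter_upwards [eventually_gt_atTop 0] with T hT
  refine norm_boxMean_le_re k hT _ _ fun y => ?_
  rw [BoundedContinuousFunction.mul_apply, hK,
    BoundedContinuousFunction.smul_apply (‖f‖ : ℂ) K, hK, smul_eq_mul, ← Complex.ofReal_mul,
    Complex.ofReal_re, norm_mul, Complex.norm_real,
    Real.norm_of_nonneg (by positivity), mul_comm]
  gcongr
  exact f.norm_coe_le_norm y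

/-- The Bochner-Fejér sums of an almost periodic function along a Følner net converge uniformly. -/
theorem tendsto_fejerSum (k : ℕ) {ι : Type*} {l : Filter ι} {F : ι → Finset (Fin k → ℝ)}
    (hne : ∀ p, (F p).Nonempty)
    (hF : ∀ a, Tendsto (fun p => (translateCount (F p) a : ℝ) / (F p).card) l (𝓝 1)) :
    ∀ f ∈ APalg k, Tendsto (fun p => fejerSum k (F p) f) l (𝓝 f) := by
  refine APalg_induction k (fun lam => ?_) (fun f hf g hg h1 h2 => ?_) (fun c f hf h => ?_)
    fun f hf h => ?_
  · simp only [fejerSum_apExp]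
    simpa using ((Complex.continuous_ofReal.tendsto _).comp (hF lam)).smul_const (apExp k lam)
  · simpa only [fejerSum_add k _ hf hg] using h1.add h2
  · simpa only [fejerSum_smul k _ c hf] using h.const_smul c
  · rw [Metric.tendsto_nhds]
    intro ε hε
    obtain ⟨p, hp, hlim, hfp⟩ := h (ε / 3) (by positivity)
    filter_upwards [Metric.tendsto_nhds.1 hlim (ε / 3) (by positivity)] with i hi
    have h1 : dist (fejerSum k (F i) f) (fejerSum k (F i) p) < ε / 3 := by
      rw [dist_eq_norm, ← fejerSum_sub k _ hf hp]
      exact (norm_fejerSum_le k (hne i) (sub_mem hf hp)).trans_lt hfp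
    rw [← dist_eq_norm, dist_comm] at hfp
    linarith [dist_triangle4 (fejerSum k (F i) f) (fejerSum k (F i) p) p f]

/-- Bohr's approximation theorem: `AP^k_Σ` is the closed algebra generated by the exponentials
with frequencies in `Σ`. -/
theorem setOf_APmem_eq_expAlg (k : ℕ) {Sg : Set (Fin k → ℝ)} (h0 : (0 : Fin k → ℝ) ∈ Sg)
    (hadd : ∀ x ∈ Sg, ∀ y ∈ Sg, x + y ∈ Sg) :
    {f | APmem k Sg f} = (expAlg k Sg : Set (APB k)) := by
  refine Set.Subset.antisymm ?_ ?_
  · rintro f ⟨hf, hspec⟩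
    obtain ⟨F, hne, hF⟩ := exists_folner_net (Fin k → ℝ)
    have hclosed : IsClosed (expAlg k Sg : Set (APB k)) := isClosed_expAlg k Sg
    refine hclosed.mem_of_tendsto (tendsto_fejerSum k hne hF f hf) (Eventually.of_forall fun p => ?_)
    refine Subalgebra.smul_mem _ (sum_mem fun mu _ => sum_mem fun nu _ => ?_) _
    by_cases h : mu - nu ∈ Sg
    · exact Subalgebra.smul_mem _ (apExp_mem_expAlg k h) _
    · have hzero : bohrCoeff k f (mu - nu) = 0 := not_not.1 (mt (@hspec (mu - nu)) h)
      rw [hzero, zero_smul]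
      exact zero_mem _
  · intro f hf
    refine ⟨expAlg_le_APalg k Sg hf, fun lam hlam => ?_⟩
    by_contra hl
    refine hlam ?_
    have hle := expAlg_le_APalg k Sg
    revert f
    suffices ∀ f ∈ expAlg k Sg, bohrCoeff k f lam = 0 from fun f hf _ => this f hf
    refine expAlg_induction k h0 hadd (fun mu hmu => ?_) (fun f hf g hg h1 h2 => ?_)
      (fun c f hf h => ?_) fun f hf h => ?_
    · rw [bohrCoeff_apExp, if_neg]
      rintro rfl
      exact hl hmu
    · rw [bohrCoeff_add k (hle hf) (hle hg), h1, h2, add_zero]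
    · rw [bohrCoeff_smul k c (hle hf), h, mul_zero]
    · refine norm_le_zero_iff.1 (le_of_forall_pos_lt_add fun ε hε => ?_)
      obtain ⟨p, hp, hp0, hfp⟩ := h ε hε
      have := norm_bohrCoeff_le k (sub_mem (hle hf) (hle hp)) lam
      rw [bohrCoeff_sub k (hle hf) (hle hp), hp0, sub_zero] at this
      linarith

/-! ### Characters and contractive semicharacters -/

theorem expAlg_induction_of_isClosed (k : ℕ) {Sg : Set (Fin k → ℝ)}
    (h0 : (0 : Fin k → ℝ) ∈ Sg) (hadd : ∀ x ∈ Sg, ∀ y ∈ Sg, x + y ∈ Sg) {P : APB k → Prop}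
    (exp : ∀ lam ∈ Sg, P (apExp k lam)) (add : ∀ f g, P f → P g → P (f + g))
    (smul : ∀ (c : ℂ) f, P f → P (c • f)) (closed : IsClosed {f | P f}) :
    ∀ f ∈ expAlg k Sg, P f := by
  refine expAlg_induction k h0 hadd exp (fun f _ g _ => add f g) (fun c f _ => smul c f)
    fun f _ h => closed.closure_subset (Metric.mem_closure_iff.2 fun ε hε => ?_)
  obtain ⟨p, -, hp, hfp⟩ := h ε hε
  exact ⟨p, hp, by rwa [dist_eq_norm]⟩

theorem exists_algHom_of_mem_apCharacters (k : ℕ) {A : Subalgebra ℂ (APB k)}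
    {φ : ↥(A : Set (APB k)) → ℂ} (hφ : φ ∈ apCharacters k A) :
    ∃ ψ : A →ₐ[ℂ] ℂ, ∀ (f : APB k) (hf : f ∈ A), ψ ⟨f, hf⟩ = φ ⟨f, hf⟩ := by
  obtain ⟨hne, hadd, hsmul, hmul⟩ := hφ
  let L : A →ₗ[ℂ] ℂ :=
    { toFun := fun f => φ ⟨f, f.2⟩
      map_add' := fun f g => hadd ⟨f, f.2⟩ ⟨g, g.2⟩ (add_mem f.2 g.2)
      map_smul' := fun c f => hsmul c ⟨f, f.2⟩ (Subalgebra.smul_mem _ f.2 c) }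
  have hmulL : ∀ f g, L (f * g) = L f * L g := fun f g =>
    hmul ⟨f, f.2⟩ ⟨g, g.2⟩ (mul_mem f.2 g.2)
  obtain ⟨f, hf⟩ := Function.ne_iff.1 hne
  have hone : L 1 = 1 := by
    have hf : L ⟨f, f.2⟩ ≠ 0 := hf
    have h := hmulL 1 ⟨f, f.2⟩
    rw [one_mul] at h
    exact mul_right_cancel₀ hf (by rw [← h, one_mul])
  exact ⟨AlgHom.ofLinearMap L hone hmulL, fun _ _ => rfl⟩

theorem norm_algHom_apply_le_of_isClosed {B : Type*} [NormedRing B] [NormedAlgebra ℂ B]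
    [CompleteSpace B] [NormOneClass B] {A : Subalgebra ℂ B}
    (hA : IsClosed (A : Set B)) (ψ : A →ₐ[ℂ] ℂ) (f : A) : ‖ψ f‖ ≤ ‖(f : B)‖ := by
  have : CompleteSpace A := hA.completeSpace_coe
  have : NormOneClass A := ⟨norm_one (α := B)⟩
  exact AlgHom.norm_apply_le_self ψ f

theorem algHom_sum_smul {R B C ι : Type*} [CommSemiring R] [Semiring B] [Algebra R B] [Semiring C]
    [Algebra R C] (ψ : B →ₐ[R] C) (s : Finset ι) (a : ι → R) (b : ι → B) :
    ψ (∑ i ∈ s, a i • b i) = ∑ i ∈ s, a i • ψ (b i) := by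
  simp only [map_sum, map_smul]

open Classical in
/-- The values of a functional on the exponentials with frequencies in `Sg`. -/
def valuesOnExp (k : ℕ) (Sg : Set (Fin k → ℝ)) (φ : ↥(expAlg k Sg : Set (APB k)) → ℂ) :
    (Fin k → ℝ) → ℂ :=
  fun lam => if h : lam ∈ Sg then φ ⟨apExp k lam, apExp_mem_expAlg k h⟩ else 0

theorem continuous_valuesOnExp (k : ℕ) (Sg : Set (Fin k → ℝ)) :
    Continuous (valuesOnExp k Sg) := by
  refine continuous_pi fun lam => ?_
  by_cases h : lam ∈ Sg
  · simp only [valuesOnExp, h, dite_true]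
    fun_prop
  · simp only [valuesOnExp, h, dite_false]
    fun_prop

theorem valuesOnExp_mem (k : ℕ) {Sg : Set (Fin k → ℝ)} (h0 : (0 : Fin k → ℝ) ∈ Sg)
    (hadd : ∀ x ∈ Sg, ∀ y ∈ Sg, x + y ∈ Sg) {φ : ↥(expAlg k Sg : Set (APB k)) → ℂ}
    (hφ : φ ∈ apCharacters k (expAlg k Sg)) :
    valuesOnExp k Sg φ ∈ contractiveSemicharacters k Sg := by
  obtain ⟨ψ, hψ⟩ := exists_algHom_of_mem_apCharacters k hφ
  have hval : ∀ lam (h : lam ∈ Sg),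
      valuesOnExp k Sg φ lam = ψ ⟨apExp k lam, apExp_mem_expAlg k h⟩ := fun lam h => by
    simp only [valuesOnExp, h, dite_true, hψ]
  refine ⟨?_, fun lam hl mu hm => ?_, fun F hF a => ?_⟩
  · rw [hval 0 h0, ← map_one ψ]
    congr 1
    exact Subtype.ext (apExp_zero k)
  · rw [hval lam hl, hval mu hm, hval _ (hadd lam hl mu hm), ← map_mul]
    congr 1
    exact Subtype.ext (apExp_add k lam mu)
  · let p : expAlg k Sg :=
      ∑ lam ∈ F.attach, a lam • ⟨apExp k lam, apExp_mem_expAlg k (hF lam.2)⟩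
    have hp : (p : APB k) = ∑ lam ∈ F, a lam • apExp k lam := by
      rw [← Finset.sum_attach F]
      simp [p]
    have hψp : ψ p = ∑ lam ∈ F, a lam * valuesOnExp k Sg φ lam := by
      rw [← Finset.sum_attach F]
      refine (algHom_sum_smul ψ _ _ _).trans ?_
      exact Finset.sum_congr rfl fun lam _ => by
        rw [hval lam (hF lam.2), smul_eq_mul]
    rw [← hp, ← hψp]
    exact norm_algHom_apply_le_of_isClosed (isClosed_expAlg k Sg) ψ p

theorem exists_functional_of_mem_contractiveSemicharacters (k : ℕ) {Sg : Set (Fin k → ℝ)}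
    {χ : (Fin k → ℝ) → ℂ} (hχ : χ ∈ contractiveSemicharacters k Sg) :
    ∃ Φ : APB k →L[ℂ] ℂ, ‖Φ‖ ≤ 1 ∧ ∀ lam ∈ Sg, Φ (apExp k lam) = χ lam := by
  classical
  let ev : (Sg →₀ ℂ) →ₗ[ℂ] APB k := Finsupp.linearCombination ℂ fun lam : Sg => apExp k lam
  let L : (Sg →₀ ℂ) →ₗ[ℂ] ℂ := Finsupp.linearCombination ℂ fun lam : Sg => χ lam
  have hbound : ∀ c, ‖L c‖ ≤ ‖ev c‖ := fun c => by
    have h := hχ.2.2 (c.support.map (Function.Embedding.subtype _))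
      (fun lam hl => by
        obtain ⟨mu, -, rfl⟩ := Finset.mem_map.1 hl
        exact mu.2)
      fun lam => if h : lam ∈ Sg then c ⟨lam, h⟩ else 0
    simpa [Finset.sum_map, L, ev, Finsupp.linearCombination_apply, Finsupp.sum] using h
  obtain ⟨g, hg⟩ := ev.rangeRestrict.exists_rightInverse_of_surjective ev.range_rangeRestrict
  have hevg : ∀ y : LinearMap.range ev, ev (g y) = y := fun y =>
    congrArg Subtype.val (LinearMap.congr_fun hg y)
  let φ : LinearMap.range ev →L[ℂ] ℂ := (L ∘ₗ g).mkContinuous 1 fun y => by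
    rw [one_mul]
    refine (hbound (g y)).trans_eq ?_
    rw [hevg, Submodule.coe_norm]
  obtain ⟨Φ, hΦ, hnorm⟩ := exists_extension_norm_eq (LinearMap.range ev) φ
  refine ⟨Φ, hnorm.trans_le (LinearMap.mkContinuous_norm_le _ zero_le_one _), fun lam hl => ?_⟩
  have hsingle : ev (Finsupp.single ⟨lam, hl⟩ 1) = apExp k lam := by simp [ev]
  have h1 := hΦ ⟨apExp k lam, Finsupp.single ⟨lam, hl⟩ 1, hsingle⟩
  have h2 : L (g ⟨apExp k lam, Finsupp.single ⟨lam, hl⟩ 1, hsingle⟩) = χ lam := by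
    have h3 := hbound (g ⟨apExp k lam, Finsupp.single ⟨lam, hl⟩ 1, hsingle⟩ -
      Finsupp.single ⟨lam, hl⟩ 1)
    rw [map_sub ev, hevg, hsingle, sub_self, norm_zero, norm_le_zero_iff, map_sub,
      sub_eq_zero] at h3
    rw [h3]
    simp [L]
  exact h1.trans h2

/-- A contractive functional extending a contractive semicharacter. -/
def extendSemicharacter (k : ℕ) {Sg : Set (Fin k → ℝ)} (χ : contractiveSemicharacters k Sg) :
    APB k →L[ℂ] ℂ :=
  (exists_functional_of_mem_contractiveSemicharacters k χ.2).choose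

theorem norm_extendSemicharacter_apply_le (k : ℕ) {Sg : Set (Fin k → ℝ)}
    (χ : contractiveSemicharacters k Sg) (f : APB k) : ‖extendSemicharacter k χ f‖ ≤ ‖f‖ := by
  have h := (exists_functional_of_mem_contractiveSemicharacters k χ.2).choose_spec.1
  exact (ContinuousLinearMap.le_of_opNorm_le _ h f).trans_eq (one_mul _)

theorem extendSemicharacter_apExp (k : ℕ) {Sg : Set (Fin k → ℝ)}
    (χ : contractiveSemicharacters k Sg) {lam : Fin k → ℝ} (h : lam ∈ Sg) :
    extendSemicharacter k χ (apExp k lam) = χ.1 lam :=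
  (exists_functional_of_mem_contractiveSemicharacters k χ.2).choose_spec.2 lam h

theorem extendSemicharacter_mul (k : ℕ) {Sg : Set (Fin k → ℝ)} (h0 : (0 : Fin k → ℝ) ∈ Sg)
    (hadd : ∀ x ∈ Sg, ∀ y ∈ Sg, x + y ∈ Sg) (χ : contractiveSemicharacters k Sg) :
    ∀ f ∈ expAlg k Sg, ∀ g ∈ expAlg k Sg, extendSemicharacter k χ (f * g) =
      extendSemicharacter k χ f * extendSemicharacter k χ g := by
  refine expAlg_induction_of_isClosed k h0 hadd (fun lam hl => ?_)
    (fun f f' h h' g hg => ?_) (fun c f h g hg => ?_) ?_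
  · refine expAlg_induction_of_isClosed k h0 hadd (fun mu hm => ?_)
      (fun g g' h h' => ?_) (fun c g h => ?_) ?_
    · rw [← apExp_add, extendSemicharacter_apExp k χ hl, extendSemicharacter_apExp k χ hm,
        extendSemicharacter_apExp k χ (hadd lam hl mu hm), χ.2.2.1 lam hl mu hm]
    · rw [mul_add, map_add, h, h', map_add, mul_add]
    · rw [mul_smul_comm, map_smul, h, map_smul, smul_eq_mul, smul_eq_mul, mul_left_comm]
    · exact isClosed_eq (by fun_prop) (by fun_prop)
  · rw [add_mul, map_add, h g hg, h' g hg, map_add, add_mul]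
  · rw [smul_mul_assoc, map_smul, h g hg, map_smul, smul_eq_mul, smul_eq_mul, mul_assoc]
  · simp only [Set.ofPred_forall]
    exact isClosed_iInter fun g => isClosed_iInter fun _ =>
      isClosed_eq (by fun_prop) (by fun_prop)

theorem extendSemicharacter_mem (k : ℕ) {Sg : Set (Fin k → ℝ)} (h0 : (0 : Fin k → ℝ) ∈ Sg)
    (hadd : ∀ x ∈ Sg, ∀ y ∈ Sg, x + y ∈ Sg) (χ : contractiveSemicharacters k Sg) :
    (fun f : ↥(expAlg k Sg : Set (APB k)) => extendSemicharacter k χ f) ∈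
      apCharacters k (expAlg k Sg) := by
  refine ⟨fun h => ?_, fun f g _ => map_add _ _ _, fun c f _ => map_smul _ _ _,
    fun f g _ => extendSemicharacter_mul k h0 hadd χ f f.2 g g.2⟩
  have h1 := congrFun h ⟨apExp k 0, apExp_mem_expAlg k h0⟩
  simp only [extendSemicharacter_apExp k χ h0, χ.2.1] at h1
  exact one_ne_zero h1

theorem continuous_extendSemicharacter (k : ℕ) {Sg : Set (Fin k → ℝ)}
    (h0 : (0 : Fin k → ℝ) ∈ Sg) (hadd : ∀ x ∈ Sg, ∀ y ∈ Sg, x + y ∈ Sg) :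
    ∀ f ∈ expAlg k Sg, Continuous fun χ : contractiveSemicharacters k Sg =>
      extendSemicharacter k χ f := by
  refine expAlg_induction k h0 hadd (fun lam hl => ?_) (fun f _ g _ h h' => ?_)
    (fun c f _ h => ?_) fun f _ h => ?_
  · simp only [extendSemicharacter_apExp k _ hl]
    exact (continuous_apply lam).comp continuous_subtype_val
  · simp only [map_add]
    exact h.add h'
  · simp only [map_smul]
    exact h.const_smul c
  · refine continuous_of_uniform_approx_of_continuous fun u hu => ?_
    obtain ⟨ε, hε, hεu⟩ := Metric.mem_uniformity_dist.1 hu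
    obtain ⟨p, -, hp, hfp⟩ := h ε hε
    refine ⟨_, hp, fun χ => hεu ?_⟩
    rw [dist_eq_norm, ← map_sub]
    exact (norm_extendSemicharacter_apply_le k χ _).trans_lt hfp

theorem extendSemicharacter_valuesOnExp (k : ℕ) {Sg : Set (Fin k → ℝ)}
    (h0 : (0 : Fin k → ℝ) ∈ Sg) (hadd : ∀ x ∈ Sg, ∀ y ∈ Sg, x + y ∈ Sg)
    {φ : ↥(expAlg k Sg : Set (APB k)) → ℂ} (hφ : φ ∈ apCharacters k (expAlg k Sg))
    (f : APB k) (hf : f ∈ expAlg k Sg) :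
    extendSemicharacter k ⟨valuesOnExp k Sg φ, valuesOnExp_mem k h0 hadd hφ⟩ f = φ ⟨f, hf⟩ := by
  obtain ⟨ψ, hψ⟩ := exists_algHom_of_mem_apCharacters k hφ
  rw [← hψ f hf]
  set Φ := extendSemicharacter k ⟨valuesOnExp k Sg φ, valuesOnExp_mem k h0 hadd hφ⟩ with hΦ
  suffices ∀ f ∈ expAlg k Sg, ∀ hf : f ∈ expAlg k Sg, Φ f = ψ ⟨f, hf⟩ from this f hf hf
  refine expAlg_induction k h0 hadd (fun lam hl _ => ?_) (fun f hf g hg h h' _ => ?_)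
    (fun c f hf h _ => ?_) fun f hf h _ => ?_
  · rw [hΦ, extendSemicharacter_apExp k _ hl, hψ]
    simp only [valuesOnExp, hl, dite_true]
  · rw [map_add, h hf, h' hg, hψ, hψ, hψ]
    exact (hφ.2.1 ⟨f, hf⟩ ⟨g, hg⟩ _).symm
  · rw [map_smul, h hf, hψ, hψ]
    exact (hφ.2.2.1 c ⟨f, hf⟩ _).symm
  · rw [← sub_eq_zero, ← norm_le_zero_iff]
    refine le_of_forall_pos_lt_add fun ε hε => ?_
    obtain ⟨p, hp, hpeq, hfp⟩ := h (ε / 2) (by positivity)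
    have h1 := norm_extendSemicharacter_apply_le k
      ⟨valuesOnExp k Sg φ, valuesOnExp_mem k h0 hadd hφ⟩ (f - p)
    have h2 := norm_algHom_apply_le_of_isClosed (isClosed_expAlg k Sg) ψ (⟨f, hf⟩ - ⟨p, hp⟩)
    rw [← hΦ, map_sub, hpeq hp] at h1
    rw [map_sub, norm_sub_rev] at h2
    have h3 : ‖((⟨f, hf⟩ - ⟨p, hp⟩ : expAlg k Sg) : APB k)‖ = ‖f - p‖ := rfl
    have h4 := norm_sub_le_norm_sub_add_norm_sub (Φ f) (ψ ⟨p, hp⟩) (ψ ⟨f, hf⟩)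
    linarith

theorem contractibleSpace_of_retract {X Y : Type*} [TopologicalSpace X] [TopologicalSpace Y]
    [ContractibleSpace Y] (s : C(X, Y)) (r : C(Y, X)) (h : ∀ x, r (s x) = x) :
    ContractibleSpace X := by
  rw [contractible_iff_id_nullhomotopic]
  convert ((id_nullhomotopic Y).comp_left s).comp_right r using 1
  ext x
  exact (h x).symm

/-- **Contractibility of `M(AP^k_Σ)`** (Theorem 3.1 for `AP`).  Let `S ⊂ ℝ^k`
be a halfspace and `Σ ⊆ S` an additive semigroup containing `0`.  Then the
maximal ideal space of `AP^k_Σ` is contractible. -/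
theorem ap_characterSpace_contractible (k : ℕ) (S Sg : Set (Fin k → ℝ))
    (hS : IsHalfspace k S) (hSgS : Sg ⊆ S) (h0 : (0 : Fin k → ℝ) ∈ Sg)
    (hadd : ∀ x ∈ Sg, ∀ y ∈ Sg, x + y ∈ Sg) :
    ContractibleSpace ↥(apCharacters k {f | APmem k Sg f}) := by
  rw [setOf_APmem_eq_expAlg k h0 hadd]
  have := contractibleSpace_contractiveSemicharacters hS hSgS
  refine contractibleSpace_of_retract
    (Y := contractiveSemicharacters k Sg)
    ⟨fun φ => ⟨valuesOnExp k Sg φ, valuesOnExp_mem k h0 hadd φ.2⟩,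
      ((continuous_valuesOnExp k Sg).comp continuous_subtype_val).subtype_mk _⟩
    ⟨fun χ => ⟨fun f : ↥(expAlg k Sg : Set (APB k)) => extendSemicharacter k χ f,
      extendSemicharacter_mem k h0 hadd χ⟩,
      Continuous.subtype_mk (continuous_pi fun f : ↥(expAlg k Sg : Set (APB k)) =>
        continuous_extendSemicharacter k h0 hadd (f : APB k) f.2) _⟩ fun φ => ?_
  exact Subtype.ext (funext fun f => extendSemicharacter_valuesOnExp k h0 hadd φ.2 f f.2)
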